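/- Let p ≥ 5 be a prime with p ≡ 2 (mod 3) and let r be a non-negative integer. Then ∑_{k=rp}^{(r+1)p-1} C(2k,k)/(k+1) ≡ -C(2r,r)·(3r+2)/(r+1) (mod p²), as a congruence of rational numbers (in fact of integers, since both sides are integers). -/

import Mathlib

/-- Congruence of rational numbers modulo `p^m`: `a ≡ b (mod p^m)` means
`a - b = p^m · (s/t)` with `p` not dividing `t`. -/
def ratCongr (p m : ℕ) (a b : ℚ) : Prop :=
  ∃ s t : ℤ, ¬ ((p : ℤ) ∣ t) ∧ (a - b) * (t : ℚ) = (p : ℚ) ^ m * (s : ℚ)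

/-!
Let `Φ = 1 + X + X²`. Since `(1 + X)² = X + Φ`, the polynomial `Q n = ((1 + X)²ⁿ - Xⁿ) / Φ` is a
geometric sum, and `∑_{k<n} catalan k` is the coefficient of `Xⁿ` in `(X - 1) Q n`.
For a prime `p ≠ 3`, `Φ(X^p) = Φ Ψ` with `Ψ` the cyclotomic polynomial of index `3p`, and
`Q p = Ψ + p H` for some `H`, so the binomial expansion of `((1 + X^p)² + p Φ H)^r` gives
`Q (r p) ≡ Ψ · (Q r)(X^p) + r p H · (1 + X^p)^(2 (r - 1)) (mod p²)`.
Multiply by `X - 1` and keep only the exponents divisible by `p`. The first term contributes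
`(X - 1 - ε X) Q r`, with `ε = 3` or `0` according to `p mod 3`. The second one contributes nothing:
modulo `p`, where `1 + X^p = (1 + X)^p` is prime to `Φ`, the polynomial `H` is a multiple
`h · (1 + X^p)` with `Φ h = 2 ((1 + X)^p - 1 - X^p) / p`, so that `(X - 1) h` has degree less than
`p` and no constant term.
-/

namespace CatalanBlock

open Finset Polynomial

section CommRing

variable {R : Type*} [CommRing R]

theorem contract_eq_of_natDegree_lt_two_mul {p : ℕ} {f : R[X]} (hf : f.natDegree < 2 * p) :
    contract p f = C (f.coeff 0) + C (f.coeff p) * X := by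
  have hp : p ≠ 0 := by omega
  ext n
  rw [coeff_contract hp, coeff_add, coeff_C, coeff_C_mul, coeff_X]
  rcases n with _ | _ | n
  · simp
  · simp
  · have : 2 * p ≤ (n + 1 + 1) * p := Nat.mul_le_mul_right p (by omega)
    simp [coeff_eq_zero_of_natDegree_lt (hf.trans_le this)]

theorem natDegree_X_sub_one_mul_le (f : R[X]) : ((X - 1) * f).natDegree ≤ 1 + f.natDegree :=
  natDegree_mul_le_of_le (by compute_degree) le_rfl

theorem cyclotomic_three_eq_one_add_X_sq_sub_X : cyclotomic 3 R = (1 + X) ^ 2 - X := by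
  rw [cyclotomic_three]
  ring

theorem isCoprime_cyclotomic_three_one_add_X : IsCoprime (cyclotomic 3 R) (1 + X) :=
  ⟨1, -X, by rw [cyclotomic_three]; ring⟩

theorem natDegree_cyclotomic_three_mul [Nontrivial R] {f : R[X]} (hf : f ≠ 0) :
    (cyclotomic 3 R * f).natDegree = 2 + f.natDegree := by
  rw [(cyclotomic.monic 3 R).natDegree_mul' hf, natDegree_cyclotomic, Nat.totient_prime
    Nat.prime_three]

theorem cyclotomic_three_mul_eq (f : R[X]) : cyclotomic 3 R * f = X ^ 2 * f + X * f + f := by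
  rw [cyclotomic_three, add_mul, add_mul, one_mul]

theorem coeff_one_cyclotomic_three_mul (f : R[X]) :
    (cyclotomic 3 R * f).coeff 1 = f.coeff 0 + f.coeff 1 := by
  rw [cyclotomic_three_mul_eq, coeff_add, coeff_add, coeff_X_pow_mul', if_neg (by norm_num),
    coeff_X_mul, zero_add]

theorem coeff_add_two_cyclotomic_three_mul (f : R[X]) (n : ℕ) :
    (cyclotomic 3 R * f).coeff (n + 2) = f.coeff n + f.coeff (n + 1) + f.coeff (n + 2) := by
  rw [cyclotomic_three_mul_eq, coeff_add, coeff_add, coeff_X_pow_mul, coeff_X_mul]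

theorem contract_X_sub_one_mul_eq_zero {p : ℕ} {f : R[X]}
    (h_zero : (cyclotomic 3 R * f).coeff 0 = 0) (h_deg : (cyclotomic 3 R * f).natDegree < p) :
    contract p ((X - 1) * f) = 0 := by
  nontriviality R
  rcases eq_or_ne f 0 with rfl | hf
  · ext
    rw [coeff_contract (by omega), mul_zero, coeff_zero, coeff_zero]
  have hf_zero : f.coeff 0 = 0 := by
    simpa [mul_coeff_zero, cyclotomic_three] using h_zero
  have h_mul_deg : ((X - 1) * f).natDegree < p := by
    have := natDegree_X_sub_one_mul_le f
    rw [natDegree_cyclotomic_three_mul hf] at h_deg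
    omega
  rw [contract_eq_of_natDegree_lt_two_mul (by omega), coeff_eq_zero_of_natDegree_lt h_mul_deg,
    mul_coeff_zero, hf_zero]
  simp

end CommRing

section CyclotomicThreeMulPrime

variable {p : ℕ}

theorem cyclotomic_three_mul_cyclotomic (hp : p.Prime) (hp3 : p ≠ 3) :
    cyclotomic 3 ℤ * cyclotomic (3 * p) ℤ = expand ℤ p ((1 + X) ^ 2) - X ^ p := by
  have h_dvd : ¬ p ∣ 3 := mt (Nat.prime_dvd_prime_iff_eq hp Nat.prime_three).1 hp3
  rw [mul_comm, ← cyclotomic_expand_eq_cyclotomic_mul hp h_dvd,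
    cyclotomic_three_eq_one_add_X_sq_sub_X, map_sub, expand_X]

theorem coeff_cyclotomic_three_mul_cyclotomic_of_le (hp : p.Prime) (hp3 : p ≠ 3) {n : ℕ}
    (hn : n ≤ p) :
    (cyclotomic 3 ℤ * cyclotomic (3 * p) ℤ).coeff n =
      (if n = 0 then 1 else 0) + (if n = p then 1 else 0) := by
  have h : expand ℤ p ((1 + X) ^ 2) - X ^ p = (1 + X ^ p + X ^ (2 * p) : ℤ[X]) := by
    simp only [map_pow, map_add, map_one, expand_X]
    ring
  have := hp.pos
  rw [cyclotomic_three_mul_cyclotomic hp hp3, h, coeff_add, coeff_add, coeff_one, coeff_X_pow,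
    coeff_X_pow, if_neg (by omega : n ≠ 2 * p), add_zero]

-- Below degree `p` this is the expansion of `1 / Φ = (1 - X) / (1 - X³)`.
theorem coeff_cyclotomic_three_mul_prime_of_lt (hp : p.Prime) (hp3 : p ≠ 3) {n : ℕ} (hn : n < p) :
    (cyclotomic (3 * p) ℤ).coeff n = if n % 3 = 0 then 1 else if n % 3 = 1 then -1 else 0 := by
  have h_zero : (cyclotomic (3 * p) ℤ).coeff 0 = 1 :=
    cyclotomic_coeff_zero ℤ (by have := hp.pos; omega)
  induction n using Nat.strong_induction_on with
  | _ n ih =>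
  have h_coeff := coeff_cyclotomic_three_mul_cyclotomic_of_le hp hp3 hn.le
  rw [if_neg hn.ne, add_zero] at h_coeff
  rcases n with _ | _ | n
  · simpa using h_zero
  · rw [coeff_one_cyclotomic_three_mul, h_zero, if_neg (by norm_num)] at h_coeff
    simpa using eq_neg_of_add_eq_zero_right h_coeff
  · rw [coeff_add_two_cyclotomic_three_mul, ih n (by omega) (by omega),
      ih (n + 1) (by omega) (by omega)] at h_coeff
    grind

/-- The number `ε` such that, for a prime `p ≠ 3`, the block `∑_{rp ≤ k < (r+1)p} catalan k` is
congruent to `catalan r - ε * r.centralBinom` modulo `p ^ 2`. -/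
def blockDefect (p : ℕ) : ℤ := if p % 3 = 2 then 3 else 0

theorem coeff_X_sub_one_mul_cyclotomic (hp : p.Prime) (hp3 : p ≠ 3) :
    ((X - 1) * cyclotomic (3 * p) ℤ).coeff p = 1 - blockDefect p := by
  have h_coeff := coeff_cyclotomic_three_mul_cyclotomic_of_le hp hp3 le_rfl
  have h_mod : p % 3 ≠ 0 := fun h =>
    hp3 ((Nat.prime_dvd_prime_iff_eq Nat.prime_three hp).1 (Nat.dvd_of_mod_eq_zero h)).symm
  obtain ⟨n, rfl⟩ := Nat.exists_eq_add_of_le' hp.two_le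
  rw [coeff_add_two_cyclotomic_three_mul, coeff_cyclotomic_three_mul_prime_of_lt hp hp3 (by omega),
    coeff_cyclotomic_three_mul_prime_of_lt hp hp3 (by omega)] at h_coeff
  rw [sub_mul, one_mul, coeff_sub, coeff_X_mul,
    coeff_cyclotomic_three_mul_prime_of_lt hp hp3 (by omega), blockDefect]
  grind

theorem natDegree_cyclotomic_three_mul_prime (hp : p.Prime) (hp3 : p ≠ 3) :
    (cyclotomic (3 * p) ℤ).natDegree = 2 * (p - 1) := by
  rw [natDegree_cyclotomic, Nat.totient_mul ((Nat.coprime_primes Nat.prime_three hp).2 hp3.symm),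
    Nat.totient_prime Nat.prime_three, Nat.totient_prime hp]

theorem contract_X_sub_one_mul_cyclotomic (hp : p.Prime) (hp3 : p ≠ 3) :
    contract p ((X - 1) * cyclotomic (3 * p) ℤ) = X - 1 - C (blockDefect p) * X := by
  have h_deg : ((X - 1) * cyclotomic (3 * p) ℤ).natDegree < 2 * p := by
    have := natDegree_X_sub_one_mul_le (cyclotomic (3 * p) ℤ)
    have := natDegree_cyclotomic_three_mul_prime hp hp3
    have := hp.pos
    omega
  have h_zero : (cyclotomic (3 * p) ℤ).coeff 0 = 1 := by
    simpa using coeff_cyclotomic_three_mul_prime_of_lt hp hp3 hp.pos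
  rw [contract_eq_of_natDegree_lt_two_mul h_deg, coeff_X_sub_one_mul_cyclotomic hp hp3,
    mul_coeff_zero, h_zero]
  simp only [coeff_sub, coeff_X_zero, coeff_one_zero, C_sub, C_1, zero_sub, mul_one, C_neg]
  ring

end CyclotomicThreeMulPrime

/-- The quotient `((1 + X) ^ (2 * n) - X ^ n) / (1 + X + X ^ 2)`, encoded as a geometric sum so that
its coefficients of `X ^ n` and `X ^ (n - 1)` can be read off as sums of binomial coefficients. -/
noncomputable def binomSumPoly (n : ℕ) : ℤ[X] :=
  ∑ k ∈ range n, ((1 + X) ^ 2) ^ k * X ^ (n - 1 - k)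

theorem cyclotomic_three_mul_binomSumPoly (n : ℕ) :
    cyclotomic 3 ℤ * binomSumPoly n = ((1 + X) ^ 2) ^ n - X ^ n := by
  rw [binomSumPoly, cyclotomic_three_eq_one_add_X_sq_sub_X, mul_comm,
    (Commute.all _ _).geom_sum₂_mul]

theorem coeff_binomSumPoly (n : ℕ) :
    (binomSumPoly n).coeff n = ∑ k ∈ range n, ((2 * k).choose (k + 1) : ℤ) := by
  rw [binomSumPoly, finsetSum_coeff]
  refine sum_congr rfl fun k hk => ?_
  have hk := mem_range.1 hk
  rw [← pow_mul, coeff_mul_X_pow', if_pos (by omega), coeff_one_add_X_pow,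
    show n - (n - 1 - k) = k + 1 by omega]

theorem coeff_X_mul_binomSumPoly (n : ℕ) :
    (X * binomSumPoly n).coeff n = ∑ k ∈ range n, (k.centralBinom : ℤ) := by
  rw [binomSumPoly, mul_sum, finsetSum_coeff]
  refine sum_congr rfl fun k hk => ?_
  have hk := mem_range.1 hk
  rw [mul_left_comm, ← pow_succ', ← pow_mul, coeff_mul_X_pow', if_pos (by omega),
    coeff_one_add_X_pow, show n - (n - 1 - k + 1) = k by omega, Nat.centralBinom]

theorem catalan_eq_centralBinom_sub_choose (n : ℕ) :
    (catalan n : ℤ) = n.centralBinom - (2 * n).choose (n + 1) := by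
  have h_catalan : ((n : ℤ) + 1) * catalan n = n.centralBinom := by
    exact_mod_cast succ_mul_catalan_eq_centralBinom n
  have h_choose : ((2 * n).choose (n + 1) : ℤ) * (n + 1) = n.centralBinom * n := by
    have := Nat.choose_succ_right_eq (2 * n) n
    rw [show 2 * n - n = n by omega] at this
    exact_mod_cast this
  refine mul_left_cancel₀ (by positivity : (n : ℤ) + 1 ≠ 0) ?_
  linear_combination h_catalan + h_choose

theorem coeff_X_sub_one_mul_binomSumPoly (n : ℕ) :
    ((X - 1) * binomSumPoly n).coeff n = ∑ k ∈ range n, (catalan k : ℤ) := by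
  rw [sub_mul, one_mul, coeff_sub, coeff_X_mul_binomSumPoly, coeff_binomSumPoly,
    ← sum_sub_distrib]
  exact sum_congr rfl fun k _ => (catalan_eq_centralBinom_sub_choose k).symm

section Frobenius

variable {p : ℕ}

theorem C_natCast_dvd_iff_map_eq_zero (n : ℕ) (f : ℤ[X]) :
    C (n : ℤ) ∣ f ↔ f.map (Int.castRingHom (ZMod n)) = 0 := by
  rw [C_dvd_iff_dvd_coeff, Polynomial.ext_iff]
  simp only [coeff_map, eq_intCast, coeff_zero, ZMod.intCast_zmod_eq_zero_iff_dvd]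

theorem C_prime_dvd_pow_sub_expand (hp : p.Prime) (f : ℤ[X]) :
    C (p : ℤ) ∣ f ^ p - expand ℤ p f := by
  have := Fact.mk hp
  rw [C_natCast_dvd_iff_map_eq_zero, Polynomial.map_sub, Polynomial.map_pow, map_expand,
    ZMod.expand_card, sub_self]

theorem exists_one_add_X_pow_prime_eq (hp : p.Prime) :
    ∃ g : ℤ[X], (1 + X) ^ p = expand ℤ p (1 + X) + C (p : ℤ) * g ∧
      g.coeff 0 = 0 ∧ g.natDegree < p := by
  obtain ⟨g, hg⟩ := C_prime_dvd_pow_sub_expand hp (1 + X)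
  have h_coeff (n : ℕ) : (p : ℤ) * g.coeff n =
      p.choose n - ((if n = 0 then 1 else 0) + if n = p then 1 else 0) := by
    rw [← coeff_C_mul, ← hg, coeff_sub, coeff_one_add_X_pow, map_add, map_one, expand_X, coeff_add,
      coeff_one, coeff_X_pow]
  refine ⟨g, by rw [← hg, add_sub_cancel], ?_, ?_⟩
  · simpa [hp.ne_zero, hp.ne_zero.symm] using h_coeff 0
  · refine Nat.lt_of_le_pred hp.pos (natDegree_le_iff_coeff_eq_zero.2 fun n hn => ?_)
    rcases (Nat.le_of_pred_lt hn).eq_or_lt with rfl | hn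
    · simpa [hp.ne_zero] using h_coeff p
    · simpa [Nat.choose_eq_zero_of_lt hn, hn.ne', Nat.ne_zero_of_lt hn, hp.ne_zero]
        using h_coeff n

theorem exists_one_add_X_sq_pow_prime_eq (hp : p.Prime) :
    ∃ u v : ℤ[X], ((1 + X) ^ 2) ^ p =
        expand ℤ p ((1 + X) ^ 2) + C (p : ℤ) * (u * expand ℤ p (1 + X) + C (p : ℤ) * v) ∧
      u.coeff 0 = 0 ∧ u.natDegree < p := by
  obtain ⟨g, hg, hg_zero, hg_deg⟩ := exists_one_add_X_pow_prime_eq hp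
  refine ⟨C 2 * g, g ^ 2, ?_, by rw [coeff_C_mul, hg_zero, mul_zero],
    (natDegree_C_mul_le 2 g).trans_lt hg_deg⟩
  rw [pow_right_comm, hg, map_pow, C_ofNat]
  ring

/-- The polynomial divisible by `p` whose product with `1 + X + X ^ 2` is
`(1 + X) ^ (2 * p) - (1 + X ^ p) ^ 2`. -/
noncomputable def frobeniusDefect (p : ℕ) : ℤ[X] := binomSumPoly p - cyclotomic (3 * p) ℤ

theorem cyclotomic_three_mul_frobeniusDefect (hp : p.Prime) (hp3 : p ≠ 3) :
    cyclotomic 3 ℤ * frobeniusDefect p = ((1 + X) ^ 2) ^ p - expand ℤ p ((1 + X) ^ 2) := by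
  rw [frobeniusDefect, mul_sub, cyclotomic_three_mul_binomSumPoly,
    cyclotomic_three_mul_cyclotomic hp hp3, sub_sub_sub_cancel_right]

theorem C_prime_dvd_frobeniusDefect (hp : p.Prime) (hp3 : p ≠ 3) :
    C (p : ℤ) ∣ frobeniusDefect p := by
  have := Fact.mk hp
  have h := C_prime_dvd_pow_sub_expand hp ((1 + X) ^ 2)
  rw [← cyclotomic_three_mul_frobeniusDefect hp hp3] at h
  rw [C_natCast_dvd_iff_map_eq_zero] at h ⊢
  rw [Polynomial.map_mul, map_cyclotomic] at h
  exact (mul_eq_zero.1 h).resolve_left (cyclotomic_ne_zero 3 _)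

theorem C_prime_dvd_contract_of_frobeniusDefect_eq (hp : p.Prime) (hp3 : p ≠ 3) {f : ℤ[X]}
    (hf : frobeniusDefect p = C (p : ℤ) * f) :
    C (p : ℤ) ∣ contract p ((X - 1) * f) := by
  have := Fact.mk hp
  have hp_ne : (p : ℤ) ≠ 0 := by exact_mod_cast hp.ne_zero
  obtain ⟨u, v, huv, hu_zero, hu_deg⟩ := exists_one_add_X_sq_pow_prime_eq hp
  set φ := Int.castRingHom (ZMod p)
  have h_int : cyclotomic 3 ℤ * f = u * expand ℤ p (1 + X) + C (p : ℤ) * v := by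
    refine mul_left_cancel₀ (C_ne_zero.2 hp_ne) ?_
    rw [mul_left_comm, ← hf, cyclotomic_three_mul_frobeniusDefect hp hp3, huv,
      add_sub_cancel_left]
  have h_mod : cyclotomic 3 (ZMod p) * f.map φ = u.map φ * (1 + X) ^ p := by
    have hC : (C (p : ℤ)).map φ = 0 := (C_natCast_dvd_iff_map_eq_zero p _).1 dvd_rfl
    rw [← map_cyclotomic 3 φ, ← Polynomial.map_mul, h_int, Polynomial.map_add, Polynomial.map_mul,
      Polynomial.map_mul, hC, zero_mul, add_zero, map_expand, ZMod.expand_card, Polynomial.map_add,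
      Polynomial.map_one, map_X]
  obtain ⟨h, hh⟩ : cyclotomic 3 (ZMod p) ∣ u.map φ :=
    isCoprime_cyclotomic_three_one_add_X.pow_right.dvd_of_dvd_mul_right ⟨_, h_mod.symm⟩
  have hf_map : f.map φ = h * expand (ZMod p) p (1 + X) := by
    refine mul_left_cancel₀ (cyclotomic_ne_zero 3 (ZMod p)) ?_
    rw [h_mod, hh, ZMod.expand_card, mul_assoc]
  have h_contract : contract p ((X - 1) * h) = 0 := by
    refine contract_X_sub_one_mul_eq_zero ?_ (hh ▸ natDegree_map_le.trans_lt hu_deg)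
    rw [← hh, coeff_map, hu_zero, map_zero]
  rw [C_natCast_dvd_iff_map_eq_zero, map_contract hp.ne_zero, Polynomial.map_mul, hf_map,
    Polynomial.map_sub, map_X, Polynomial.map_one, ← mul_assoc, contract_mul_expand hp.ne_zero,
    h_contract, zero_mul]

theorem C_prime_sq_dvd_contract_frobeniusDefect (hp : p.Prime) (hp3 : p ≠ 3) :
    C ((p : ℤ) ^ 2) ∣ contract p ((X - 1) * frobeniusDefect p) := by
  obtain ⟨f, hf⟩ := C_prime_dvd_frobeniusDefect hp hp3
  have h_pull :
      contract p ((X - 1) * frobeniusDefect p) = contract p ((X - 1) * f) * C (p : ℤ) := by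
    rw [← contract_mul_expand hp.ne_zero, expand_C, hf, mul_assoc, mul_comm f]
  rw [h_pull, sq, C_mul]
  exact mul_dvd_mul_right (C_prime_dvd_contract_of_frobeniusDefect_eq hp hp3 hf) _

end Frobenius

section BlockSums

variable {p : ℕ}

theorem exists_binomSumPoly_mul_prime_eq (hp : p.Prime) (hp3 : p ≠ 3) (r : ℕ) :
    ∃ g f : ℤ[X], binomSumPoly (r * p) =
      cyclotomic (3 * p) ℤ * expand ℤ p (binomSumPoly r) + frobeniusDefect p * expand ℤ p g +
        C ((p : ℤ) ^ 2) * f := by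
  obtain ⟨a, ha⟩ : ∃ a : ℤ[X], a = (1 + X) ^ 2 := ⟨_, rfl⟩
  set Ψ := cyclotomic (3 * p) ℤ
  set H := frobeniusDefect p
  obtain ⟨K, hK⟩ := powAddExpansion (expand ℤ p a) (cyclotomic 3 ℤ * H) r
  have h_pow : a ^ p = expand ℤ p a + cyclotomic 3 ℤ * H := by
    rw [cyclotomic_three_mul_frobeniusDefect hp hp3, ha, add_sub_cancel]
  have h_expand : cyclotomic 3 ℤ * (Ψ * expand ℤ p (binomSumPoly r)) =
      expand ℤ p a ^ r - X ^ (r * p) := by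
    have := congrArg (expand ℤ p) (cyclotomic_three_mul_binomSumPoly r)
    rw [map_mul, cyclotomic_three_eq_one_add_X_sq_sub_X, map_sub, expand_X,
      ← cyclotomic_three_mul_cyclotomic hp hp3, mul_assoc, ← ha] at this
    rw [this, map_sub, map_pow, map_pow, expand_X, ← pow_mul, mul_comm p]
  have h_main : binomSumPoly (r * p) = Ψ * expand ℤ p (binomSumPoly r) +
      H * expand ℤ p (r * a ^ (r - 1)) + K * cyclotomic 3 ℤ * H ^ 2 := by
    refine mul_left_cancel₀ (cyclotomic_ne_zero 3 ℤ) ?_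
    rw [cyclotomic_three_mul_binomSumPoly, ← ha, mul_comm r p, pow_mul, h_pow, hK, mul_add, mul_add,
      h_expand, mul_comm r p, map_mul, map_natCast, map_pow]
    ring
  obtain ⟨f, hf⟩ := (pow_dvd_pow_of_dvd (C_prime_dvd_frobeniusDefect hp hp3) 2).mul_left
    (K * cyclotomic 3 ℤ)
  exact ⟨r * a ^ (r - 1), f, by rw [h_main, hf, C_pow]⟩

theorem C_prime_sq_dvd_contract_binomSumPoly_sub (hp : p.Prime) (hp3 : p ≠ 3) (r : ℕ) :
    C ((p : ℤ) ^ 2) ∣ contract p ((X - 1) * binomSumPoly (r * p)) -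
      (X - 1 - C (blockDefect p) * X) * binomSumPoly r := by
  obtain ⟨g, f, h⟩ := exists_binomSumPoly_mul_prime_eq hp hp3 r
  have h_contract : contract p ((X - 1) * binomSumPoly (r * p)) =
      (X - 1 - C (blockDefect p) * X) * binomSumPoly r +
        contract p ((X - 1) * frobeniusDefect p) * g +
        contract p ((X - 1) * f) * C ((p : ℤ) ^ 2) := by
    rw [← contract_X_sub_one_mul_cyclotomic hp hp3]
    simp only [← contract_mul_expand hp.ne_zero, ← contract_add hp.ne_zero, expand_C, h]
    congr 1
    ring
  rw [h_contract, add_assoc, add_sub_cancel_left]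
  exact dvd_add ((C_prime_sq_dvd_contract_frobeniusDefect hp hp3).mul_right g) (dvd_mul_left _ _)

theorem sum_range_mul_catalan_modEq (hp : p.Prime) (hp3 : p ≠ 3) (r : ℕ) :
    ∑ k ∈ range (r * p), (catalan k : ℤ) ≡
      ∑ k ∈ range r, ((catalan k : ℤ) - blockDefect p * k.centralBinom) [ZMOD p ^ 2] := by
  have h := (C_dvd_iff_dvd_coeff _ _).1 (C_prime_sq_dvd_contract_binomSumPoly_sub hp hp3 r) r
  rw [coeff_sub, coeff_contract hp.ne_zero, coeff_X_sub_one_mul_binomSumPoly, sub_mul, coeff_sub,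
    coeff_X_sub_one_mul_binomSumPoly, mul_assoc, coeff_C_mul, coeff_X_mul_binomSumPoly, mul_sum,
    ← sum_sub_distrib] at h
  exact (Int.modEq_iff_dvd.2 h).symm

theorem sum_Ico_mul_catalan_modEq (hp : p.Prime) (hp3 : p ≠ 3) (r : ℕ) :
    ∑ k ∈ Ico (r * p) ((r + 1) * p), (catalan k : ℤ) ≡
      catalan r - blockDefect p * r.centralBinom [ZMOD p ^ 2] := by
  rw [sum_Ico_eq_sub _ (Nat.mul_le_mul_right p r.le_succ)]
  have h := (sum_range_mul_catalan_modEq hp hp3 (r + 1)).sub (sum_range_mul_catalan_modEq hp hp3 r)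
  rwa [sum_range_succ _ r, add_sub_cancel_left] at h

end BlockSums

theorem ratCongr_intCast_of_modEq {p m : ℕ} (hp : p ≠ 1) {a b : ℤ} (h : a ≡ b [ZMOD p ^ m]) :
    ratCongr p m a b := by
  obtain ⟨s, hs⟩ := h.symm.dvd
  refine ⟨s, 1, by simpa [Int.natCast_dvd_ofNat] using hp, ?_⟩
  rw [Int.cast_one, mul_one]
  exact_mod_cast hs

theorem choose_div_succ_eq_catalan (n : ℕ) : ((2 * n).choose n : ℚ) / (n + 1) = catalan n := by
  rw [div_eq_iff (by positivity), ← Nat.centralBinom_eq_two_mul_choose, mul_comm]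
  exact_mod_cast (succ_mul_catalan_eq_centralBinom n).symm

theorem intCast_catalan_sub_blockDefect_mul_centralBinom (p r : ℕ) :
    ((catalan r - blockDefect p * r.centralBinom : ℤ) : ℚ) =
      if p % 3 = 2 then -(((2 * r).choose r : ℚ) * (3 * r + 2) / (r + 1))
      else ((2 * r).choose r : ℚ) / (r + 1) := by
  rw [Int.cast_sub, Int.cast_natCast, ← choose_div_succ_eq_catalan,
    Nat.centralBinom_eq_two_mul_choose, blockDefect]
  split_ifs
  · push_cast
    field_simp
    ring
  · simp

end CatalanBlock

open CatalanBlock in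
theorem block_sum_catalan_two_mod_three_general (p r : ℕ) (hp : p.Prime) (hp3 : p ≠ 3) :
    ratCongr p 2
      (∑ k ∈ Finset.Ico (r * p) ((r + 1) * p), ((2 * k).choose k : ℚ) / (k + 1))
      (if p % 3 = 2 then -(((2 * r).choose r : ℚ) * (3 * r + 2) / (r + 1))
        else ((2 * r).choose r : ℚ) / (r + 1)) := by
  have h := ratCongr_intCast_of_modEq hp.ne_one (sum_Ico_mul_catalan_modEq hp hp3 r)
  rw [← intCast_catalan_sub_blockDefect_mul_centralBinom]
  simpa only [choose_div_succ_eq_catalan, Int.cast_sum, Int.cast_natCast] using h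

theorem block_sum_catalan_two_mod_three (p r : ℕ) (hp : p.Prime) (hp5 : 5 ≤ p)
    (hp3 : p % 3 = 2) :
    ratCongr p 2
      (∑ k ∈ Finset.Ico (r * p) ((r + 1) * p), ((2 * k).choose k : ℚ) / (k + 1))
      (-(((2 * r).choose r : ℚ) * (3 * r + 2) / (r + 1))) := by
  simpa only [if_pos hp3] using
    block_sum_catalan_two_mod_three_general p r hp (by rintro rfl; contradiction)
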